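/- The universal enveloping algebra U(W) of the Witt algebra W is neither left noetherian nor right noetherian. -/

import Mathlib

/-!
Statement 1: The universal enveloping algebra U(W) of the Witt algebra W is neither left
noetherian nor right noetherian.

Here `k` is a field of characteristic 0 and the Witt algebra is realized as the Lie algebra
of all k-linear derivations of the Laurent polynomial ring `k[x, x⁻¹]`.  Right noetherianity
of a ring `A` is expressed as left noetherianity of the opposite ring `Aᵐᵒᵖ`.
-/

noncomputable section

/-- The Witt algebra: the Lie algebra of all `k`-linear derivations of `k[x,x⁻¹]`. -/
abbrev wittAlgebra (k : Type*) [Field k] :=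
  Derivation k (LaurentPolynomial k) (LaurentPolynomial k)

open LaurentPolynomial MulOpposite

attribute [local instance] LieRing.ofAssociativeRing

/-- The enveloping algebra is generated, as an algebra, by the Lie algebra. -/
theorem UniversalEnvelopingAlgebra.adjoin_range_ι (R L : Type*) [CommRing R] [LieRing L]
    [LieAlgebra R L] :
    Algebra.adjoin R (Set.range (UniversalEnvelopingAlgebra.ι R : L → _)) = ⊤ := by
  set S := Algebra.adjoin R (Set.range (UniversalEnvelopingAlgebra.ι R : L → _))
  let f : L →ₗ⁅R⁆ S :=
    { toFun x := ⟨UniversalEnvelopingAlgebra.ι R x, Algebra.subset_adjoin ⟨x, rfl⟩⟩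
      map_add' x y := Subtype.ext (map_add _ x y)
      map_smul' r x := Subtype.ext (map_smul _ r x)
      map_lie' {x y} := Subtype.ext (by
        simp only [LieHom.map_lie, LieRing.of_associative_ring_bracket]; rfl) }
  have h : S.val.comp (UniversalEnvelopingAlgebra.lift R f) = AlgHom.id R _ := by
    apply UniversalEnvelopingAlgebra.hom_ext
    ext x
    exact congrArg Subtype.val (UniversalEnvelopingAlgebra.lift_ι_apply R f x)
  refine eq_top_iff.2 fun u _ => ?_
  rw [← AlgHom.id_apply (R := R) u, ← h]
  exact (UniversalEnvelopingAlgebra.lift R f u).2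

/-- The anti-automorphism `x ↦ -x` shows that an enveloping algebra maps onto its opposite. -/
theorem UniversalEnvelopingAlgebra.exists_surjective_op (R L : Type*) [CommRing R] [LieRing L]
    [LieAlgebra R L] :
    ∃ f : UniversalEnvelopingAlgebra R L →ₐ[R] (UniversalEnvelopingAlgebra R L)ᵐᵒᵖ,
      Function.Surjective f := by
  let g : L →ₗ⁅R⁆ (UniversalEnvelopingAlgebra R L)ᵐᵒᵖ :=
    { toFun x := op (-UniversalEnvelopingAlgebra.ι R x)
      map_add' x y := by rw [map_add, neg_add, op_add]
      map_smul' r x := by rw [map_smul, ← smul_neg, op_smul]; rfl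
      map_lie' {x y} := by
        simp only [LieHom.map_lie, LieRing.of_associative_ring_bracket, ← op_mul, ← op_sub]
        rw [neg_mul_neg, neg_mul_neg, neg_sub] }
  refine ⟨UniversalEnvelopingAlgebra.lift R g, fun u => ?_⟩
  suffices h : ∀ v, op v ∈ (UniversalEnvelopingAlgebra.lift R g).range from h u.unop
  intro v
  have hv : v ∈ Algebra.adjoin R (Set.range (UniversalEnvelopingAlgebra.ι R : L → _)) := by
    rw [adjoin_range_ι]; trivial
  induction hv using Algebra.adjoin_induction with
  | mem _ h =>
    obtain ⟨x, rfl⟩ := h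
    exact ⟨UniversalEnvelopingAlgebra.ι R (-x), by
      refine (UniversalEnvelopingAlgebra.lift_ι_apply R g (-x)).trans ?_
      rw [map_neg]
      exact (op_neg _).symm.trans (congrArg op (neg_neg _))⟩
  | algebraMap r => exact Subalgebra.algebraMap_mem _ r
  | add v w _ _ hv hw => exact add_mem hv hw
  | mul v w _ _ hv hw => exact mul_mem hw hv

namespace WittAlgebra

variable {k : Type*} [Field k]

/-- The `k`-linear endomorphism `x d/dx` of the Laurent polynomial ring. -/
def eulerLinearMap (k : Type*) [Field k] : LaurentPolynomial k →ₗ[k] LaurentPolynomial k :=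
  (AddMonoidAlgebra.basis ℤ k).constr k fun n => (n : k) • (T n : LaurentPolynomial k)

theorem eulerLinearMap_T (n : ℤ) :
    eulerLinearMap k (T n) = (n : k) • (T n : LaurentPolynomial k) := by
  have h := (AddMonoidAlgebra.basis ℤ k).constr_basis k
    (fun n => (n : k) • (T n : LaurentPolynomial k)) n
  rwa [AddMonoidAlgebra.basis_apply] at h

/-- A property of Laurent polynomials stable under sums and scalar multiples holds for all of them
as soon as it holds for the powers of the variable. -/
theorem laurent_induction {P : LaurentPolynomial k → Prop} (f : LaurentPolynomial k)
    (sum : ∀ f g, P f → P g → P (f + g)) (smul : ∀ (a : k) f, P f → P (a • f))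
    (monomial : ∀ n, P (T n)) : P f := by
  induction f using LaurentPolynomial.induction_on' with
  | add f g hf hg => exact sum f g hf hg
  | C_mul_T n a => rw [← smul_eq_C_mul]; exact smul a _ (monomial n)

/-- The Euler derivation `x d/dx` of the Laurent polynomial ring. -/
def euler (k : Type*) [Field k] : wittAlgebra k :=
  Derivation.mk' (eulerLinearMap k) fun f g => by
    induction f using laurent_induction with
    | sum f₁ f₂ h₁ h₂ => simp only [add_mul, map_add, h₁, h₂, add_smul, smul_add]; abel
    | smul a f h => simp only [smul_mul_assoc, map_smul, h, smul_add, smul_eq_mul, mul_smul_comm]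
    | monomial m =>
      induction g using laurent_induction with
      | sum g₁ g₂ h₁ h₂ => simp only [mul_add, map_add, h₁, h₂, add_smul, smul_add]; abel
      | smul a g h => simp only [smul_mul_assoc, map_smul, h, smul_add, smul_eq_mul, mul_smul_comm]
      | monomial n =>
        simp only [← T_add, eulerLinearMap_T, smul_eq_mul, mul_smul_comm, Int.cast_add, add_smul,
          add_comm]

theorem euler_T (n : ℤ) : euler k (T n) = (n : k) • (T n : LaurentPolynomial k) :=
  eulerLinearMap_T n

/-- The coefficient of a derivation with respect to the Euler derivation. -/
def coefficient (k : Type*) [Field k] : wittAlgebra k →ₗ[k] LaurentPolynomial k where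
  toFun d := d (T 1) * T (-1)
  map_add' d e := by simp only [Derivation.add_apply, add_mul]
  map_smul' a d := by simp only [Derivation.smul_apply, smul_mul_assoc, RingHom.id_apply]

theorem derivation_apply_T_eq_zero (d : wittAlgebra k) (h : d (T 1) = 0) (n : ℤ) :
    d (T n) = 0 := by
  have h' : d (T (-1)) = 0 := by
    have := d.leibniz_of_mul_eq_one (a := T (-1)) (b := T 1) (by rw [← T_add]; rfl)
    rw [this, h, smul_zero]
  induction n using Int.induction_on with
  | zero => exact d.map_one_eq_zero
  | succ n ih => rw [T_add, d.leibniz, ih, h, smul_zero, smul_zero, add_zero]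
  | pred n ih => rw [sub_eq_add_neg, T_add, d.leibniz, ih, h', smul_zero, smul_zero, add_zero]

theorem apply_eq_coefficient_mul_euler (d : wittAlgebra k) (f : LaurentPolynomial k) :
    d f = coefficient k d * euler k f := by
  have h : (d - coefficient k d • euler k) (T 1) = 0 := by
    simp only [Derivation.sub_apply, Derivation.smul_apply, euler_T, Int.cast_one, one_smul,
      coefficient, LinearMap.coe_mk, AddHom.coe_mk, smul_eq_mul, mul_T_assoc]
    simp
  have key : (d - coefficient k d • euler k) f = 0 := by
    induction f using laurent_induction with
    | sum f g hf hg => rw [map_add, hf, hg, add_zero]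
    | smul a f hf => rw [Derivation.map_smul, hf, smul_zero]
    | monomial n => exact derivation_apply_T_eq_zero _ h n
  simpa [sub_eq_zero] using key

theorem coefficient_smul_euler (g : LaurentPolynomial k) : coefficient k (g • euler k) = g := by
  simp only [coefficient, LinearMap.coe_mk, AddHom.coe_mk, Derivation.smul_apply, euler_T,
    Int.cast_one, one_smul, smul_eq_mul, mul_T_assoc]
  simp

theorem coefficient_lie (d e : wittAlgebra k) :
    coefficient k ⁅d, e⁆ = d (coefficient k e) - e (coefficient k d) := by
  have h : ⁅d, e⁆ = (d (coefficient k e) - e (coefficient k d)) • euler k := by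
    ext f
    simp only [Derivation.commutator_apply, Derivation.smul_apply, smul_eq_mul]
    rw [apply_eq_coefficient_mul_euler e f, apply_eq_coefficient_mul_euler d f, d.leibniz,
      e.leibniz, apply_eq_coefficient_mul_euler d (euler k f),
      apply_eq_coefficient_mul_euler e (euler k f)]
    simp only [smul_eq_mul]
    ring_nf
  rw [h, coefficient_smul_euler]

/-- The divergence of a derivation with respect to the volume form `dx / x`. -/
def divergence (k : Type*) [Field k] : wittAlgebra k →ₗ[k] LaurentPolynomial k :=
  (euler k : LaurentPolynomial k →ₗ[k] LaurentPolynomial k) ∘ₗ coefficient k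

theorem divergence_smul_euler (g : LaurentPolynomial k) : divergence k (g • euler k) = euler k g :=
  congrArg (euler k) (coefficient_smul_euler g)

theorem divergence_lie (d e : wittAlgebra k) :
    divergence k ⁅d, e⁆ = d (divergence k e) - e (divergence k d) := by
  change euler k (coefficient k ⁅d, e⁆) =
    d (euler k (coefficient k e)) - e (euler k (coefficient k d))
  rw [coefficient_lie]
  simp only [map_sub, apply_eq_coefficient_mul_euler d, apply_eq_coefficient_mul_euler e,
    Derivation.leibniz, smul_eq_mul]
  ring

/-- The action of the Witt algebra on the infinitesimal deformation `f (dx / x)^ε`, `ε² = 0`, of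
its action on Laurent polynomials. -/
def densityLieHom (k : Type*) [Field k] :
    wittAlgebra k →ₗ⁅k⁆ DualNumber (Module.End k (LaurentPolynomial k)) where
  toFun d := TrivSqZeroExt.inl (d : LaurentPolynomial k →ₗ[k] LaurentPolynomial k) +
    TrivSqZeroExt.inr (LinearMap.mulLeft k (divergence k d))
  map_add' d e := by
    ext <;> simp [add_mul]
  map_smul' a d := by
    ext <;> simp
  map_lie' {d e} := by
    rw [LieRing.of_associative_ring_bracket]
    refine TrivSqZeroExt.ext (LinearMap.ext fun f => ?_) (LinearMap.ext fun f => ?_)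
    · simp [LieRing.of_associative_ring_bracket]
    · simp [divergence_lie, sub_mul]
      ring_nf

/-- The extension of `densityLieHom` to the enveloping algebra. -/
def density (k : Type*) [Field k] : UniversalEnvelopingAlgebra k (wittAlgebra k) →ₐ[k]
    DualNumber (Module.End k (LaurentPolynomial k)) :=
  UniversalEnvelopingAlgebra.lift k (densityLieHom k)

theorem density_ι (d : wittAlgebra k) :
    density k (UniversalEnvelopingAlgebra.ι k d) = densityLieHom k d :=
  UniversalEnvelopingAlgebra.lift_ι_apply k (densityLieHom k) d

theorem exists_fst_density_apply_one (u : UniversalEnvelopingAlgebra k (wittAlgebra k)) :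
    ∃ c : k, (density k u).fst 1 = c • (1 : LaurentPolynomial k) := by
  have hu : u ∈ Algebra.adjoin k
      (Set.range (UniversalEnvelopingAlgebra.ι k : wittAlgebra k → _)) := by
    rw [UniversalEnvelopingAlgebra.adjoin_range_ι]; trivial
  induction hu using Algebra.adjoin_induction with
  | mem _ h =>
    obtain ⟨d, rfl⟩ := h
    exact ⟨0, by rw [density_ι]; simp [densityLieHom]⟩
  | algebraMap r => exact ⟨r, by simp [TrivSqZeroExt.algebraMap_eq_inl']⟩
  | add v w _ _ hv hw =>
    obtain ⟨a, ha⟩ := hv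
    obtain ⟨b, hb⟩ := hw
    exact ⟨a + b, by simp [ha, hb, add_smul]⟩
  | mul v w _ _ hv hw =>
    obtain ⟨a, ha⟩ := hv
    obtain ⟨b, hb⟩ := hw
    exact ⟨b * a, by simp [ha, hb, mul_smul]⟩

/-- The basis element `e_n = x^{n+1} d/dx` of the Witt algebra, in the enveloping algebra. -/
def basisElement (k : Type*) [Field k] (n : ℤ) : UniversalEnvelopingAlgebra k (wittAlgebra k) :=
  UniversalEnvelopingAlgebra.ι k ((T n : LaurentPolynomial k) • euler k)

theorem fst_density_basisElement (n : ℤ) (f : LaurentPolynomial k) :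
    (density k (basisElement k n)).fst f = T n * euler k f := by
  rw [basisElement, density_ι]
  simp [densityLieHom]

theorem snd_density_basisElement (n : ℤ) (f : LaurentPolynomial k) :
    (density k (basisElement k n)).snd f = (n : k) • (T n * f) := by
  rw [basisElement, density_ι]
  simp [densityLieHom, divergence_smul_euler, euler_T]

/-- The element `e_{n-1} e_1 + e_{n+1} e_{-1} - 2 e_n e_0`, which annihilates all Laurent
polynomials. -/
def secondDifference (k : Type*) [Field k] (n : ℤ) :
    UniversalEnvelopingAlgebra k (wittAlgebra k) :=
  basisElement k (n - 1) * basisElement k 1 + basisElement k (n + 1) * basisElement k (-1) -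
    (2 : k) • (basisElement k n * basisElement k 0)

theorem fst_density_secondDifference (n : ℤ) : (density k (secondDifference k n)).fst = 0 := by
  refine LinearMap.ext fun f => ?_
  have h : (T 1 * T (-1) : LaurentPolynomial k) = 1 := by rw [← T_add]; rfl
  have h₁ : euler k (T 1) = T 1 := by simp [euler_T]
  have h₂ : euler k (T (-1)) = -T (-1) := by simp [euler_T]
  simp only [secondDifference, map_sub, map_add, map_mul, TrivSqZeroExt.fst_sub,
    TrivSqZeroExt.fst_add, TrivSqZeroExt.fst_mul, LinearMap.sub_apply,
    LinearMap.add_apply, Module.End.mul_apply, fst_density_basisElement,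
    Derivation.leibniz, h₁, h₂, T_zero, one_mul, smul_eq_mul, LinearMap.zero_apply, T_sub, T_add,
    two_smul]
  linear_combination (2 * T n * euler k (euler k f)) * h

theorem snd_density_secondDifference (n : ℤ) :
    (density k (secondDifference k n)).snd 1 = (2 : k) • (T n : LaurentPolynomial k) := by
  have h : (T 1 * T (-1) : LaurentPolynomial k) = 1 := by rw [← T_add]; rfl
  have h₁ : euler k (T 1) = T 1 := by simp [euler_T]
  have h₂ : euler k (T (-1)) = -T (-1) := by simp [euler_T]
  simp only [secondDifference, map_sub, map_add, map_mul, TrivSqZeroExt.snd_sub,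
    TrivSqZeroExt.snd_add, TrivSqZeroExt.snd_mul, LinearMap.sub_apply,
    LinearMap.add_apply, smul_eq_mul, op_smul_eq_mul, Module.End.mul_apply,
    fst_density_basisElement, snd_density_basisElement, Derivation.map_one_eq_zero, mul_zero,
    mul_one, Int.cast_one, Int.cast_neg, Int.cast_zero, one_smul, neg_smul, zero_smul,
    map_neg, map_zero, h₁, h₂, T_sub, T_add, two_smul]
  linear_combination (2 * T n) * h

theorem not_isNoetherianRing_op [CharZero k] :
    ¬ IsNoetherianRing (UniversalEnvelopingAlgebra k (wittAlgebra k))ᵐᵒᵖ := by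
  intro hN
  let U := UniversalEnvelopingAlgebra k (wittAlgebra k)
  let J : Ideal Uᵐᵒᵖ :=
    { carrier := {u | (density k u.unop).fst = 0}
      add_mem' {u v} hu hv := by
        simp only [Set.mem_ofPred_eq] at hu hv ⊢
        rw [unop_add, map_add, TrivSqZeroExt.fst_add, hu, hv, add_zero]
      zero_mem' := by simp
      smul_mem' u v hv := by
        simp only [Set.mem_ofPred_eq] at hv ⊢
        rw [smul_eq_mul, unop_mul, map_mul, TrivSqZeroExt.fst_mul, hv, zero_mul] }
  let θ : Uᵐᵒᵖ → LaurentPolynomial k := fun u => (density k u.unop).snd 1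
  obtain ⟨S, hS⟩ := (isNoetherian_def.1 hN J : J.FG)
  have hSJ : ∀ u ∈ S, u ∈ J := fun u hu => hS ▸ Submodule.subset_span hu
  have hθ : ∀ u ∈ J, θ u ∈ Submodule.span k (θ '' S) := by
    intro u hu
    rw [← hS] at hu
    induction hu using Submodule.span_induction with
    | mem u hu => exact Submodule.subset_span ⟨u, hu, rfl⟩
    | zero => simp [θ]
    | add u v _ _ hu hv => simpa [θ] using add_mem hu hv
    | smul u v hv ih =>
      obtain ⟨c, hc⟩ := exists_fst_density_apply_one u.unop
      have hv0 : (density k v.unop).fst = 0 := by rw [hS] at hv; exact hv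
      have : θ (u • v) = c • θ v := by simp [θ, hv0, hc]
      rw [this]
      exact Submodule.smul_mem _ c ih
  have htop : Submodule.span k (θ '' S) = ⊤ := by
    refine eq_top_iff.2 fun f _ => ?_
    induction f using laurent_induction with
    | sum f g hf hg => exact add_mem (hf trivial) (hg trivial)
    | smul a f hf => exact Submodule.smul_mem _ a (hf trivial)
    | monomial n =>
      have h := hθ (op (secondDifference k n)) (fst_density_secondDifference n)
      simp only [θ, unop_op, snd_density_secondDifference] at h
      exact (Submodule.smul_mem_iff _ two_ne_zero).1 h
  have hfin : Module.Finite k (LaurentPolynomial k) :=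
    ⟨htop ▸ Submodule.fg_span (S.finite_toSet.image θ)⟩
  exact Set.infinite_univ.not_finite <| Set.finite_univ_iff.2 <|
    Module.Finite.finite_basis (AddMonoidAlgebra.basis ℤ k)

end WittAlgebra

theorem witt_enveloping_not_noetherian (k : Type*) [Field k] [CharZero k] :
    ¬ IsNoetherianRing (UniversalEnvelopingAlgebra k (wittAlgebra k)) ∧
      ¬ IsNoetherianRing (UniversalEnvelopingAlgebra k (wittAlgebra k))ᵐᵒᵖ := by
  refine ⟨fun h => WittAlgebra.not_isNoetherianRing_op (k := k) ?_,
    WittAlgebra.not_isNoetherianRing_op⟩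
  obtain ⟨f, hf⟩ := UniversalEnvelopingAlgebra.exists_surjective_op k (wittAlgebra k)
  exact isNoetherianRing_of_surjective _ _ f.toRingHom hf

end
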